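/- Let 0 < a ≤ 1/√2 and 0 < y ≤ 1, and let T = (T₁,T₂) be the 2-variable weighted shift of Figure 2. Then T is subnormal if and only if y ≤ √(1/(2−a²)). -/

import Mathlib

open ContinuousLinearMap

noncomputable section

/-- The Hilbert space `ℓ²(ℤ₊²)`. -/
abbrev ℓ2 : Type := lp (fun _ : ℕ × ℕ => ℂ) 2

/-- The canonical orthonormal basis vector `e_k` of `ℓ²(ℤ₊²)`. -/
def e (k : ℕ × ℕ) : ℓ2 := lp.single 2 k 1

/-- The weight sequence `x₀ = y√(3/4)`, `xₙ = √((n+1)(n+3))/(n+2)` for `n ≥ 1`. -/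
def xseq (y : ℝ) : ℕ → ℝ
  | 0 => y * Real.sqrt (3 / 4)
  | n + 1 => Real.sqrt (((n : ℝ) + 2) * ((n : ℝ) + 4)) / ((n : ℝ) + 3)

/-- The horizontal weights of the 2-variable weighted shift of Figure 2:
`α_{(n,0)} = xₙ`, `α_{(0,j)} = a` and `α_{(n,j)} = 1` for `n, j ≥ 1`. -/
def alphaF (a y : ℝ) : ℕ × ℕ → ℝ
  | (n, 0) => xseq y n
  | (0, _ + 1) => a
  | (_ + 1, _ + 1) => 1

/-- The vertical weights of the 2-variable weighted shift of Figure 2: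
`β_{(0,0)} = y`, `β_{(n,0)} = a y/(x₀⋯x_{n−1})` for `n ≥ 1`, and `β_{(n,j)} = 1` for `j ≥ 1`. -/
def betaF (a y : ℝ) : ℕ × ℕ → ℝ
  | (0, 0) => y
  | (n + 1, 0) => a * y / ∏ i ∈ Finset.range (n + 1), xseq y i
  | (_, _ + 1) => 1

/-- A (commuting) pair of bounded operators on a complex Hilbert space `H` is *subnormal*
if there are a complex Hilbert space `K`, a linear isometry `V : H → K`, and a commuting
pair `N = (N₁, N₂)` of normal bounded operators on `K` with `Nᵢ V = V Tᵢ`. -/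
def SubnormalPair (T₁ T₂ : ℓ2 →L[ℂ] ℓ2) : Prop :=
  ∃ (K : Type) (_ : NormedAddCommGroup K) (_ : InnerProductSpace ℂ K) (_ : CompleteSpace K)
    (N₁ N₂ : K →L[ℂ] K) (V : ℓ2 →ₗᵢ[ℂ] K),
    (N₁ ∘L N₂ = N₂ ∘L N₁) ∧
    (adjoint N₁ ∘L N₁ = N₁ ∘L adjoint N₁) ∧
    (adjoint N₂ ∘L N₂ = N₂ ∘L adjoint N₂) ∧
    (∀ x, N₁ (V x) = V (T₁ x)) ∧ (∀ x, N₂ (V x) = V (T₂ x))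

/-! The squared norms of the vectors `T₁ⁱ T₂ʲ e₀₀` are the moments `∫ sⁱ tʲ dμ` of the signed
measure

  `μ = y²(1 - a²) δ_(0,1) + y²a² δ_(1,1) + y²(1/2 - a²) δ_(1,0) + (1 - y²(2 - a²)) δ_(0,0)`
  `    + (y²/2) (ds × δ_0)` on `[0, 1]²`,

so the claim is Berger's theorem for this `μ`: the shift is subnormal iff `μ ≥ 0`. If `N₁, N₂` are
commuting normal operators extending the shift, then
`∫ p(s)² q(t)² dμ = ‖p(N₁⋆N₁) q(N₂⋆N₂) e₀₀‖² ≥ 0`, since by Fuglede's theorem `N₁⋆N₁` and `N₂⋆N₂`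
commute. With `q = 1 - t`, the choices `p = (1 - s)ᵐ` and `p = sᵐ` isolate the masses at `(0, 0)`
and `(1, 0)` as `m → ∞`. Conversely, if `μ` is positive, its rotation-invariant lift to `ℂ²` makes
the monomials `z₁ⁱ z₂ʲ` orthogonal with norms those of `T₁ⁱ T₂ʲ e₀₀`, so multiplication by the
coordinates is a normal extension. -/

open MeasureTheory Polynomial
open scoped ComplexOrder

/-- `(T₁, T₂)` is the commuting 2-variable weighted shift with weights `α`, `β`. -/
structure IsWeightedShift (α β : ℕ × ℕ → ℝ) (T₁ T₂ : ℓ2 →L[ℂ] ℓ2) : Prop where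
  map_fst : ∀ k, T₁ (e k) = (α k : ℂ) • e (k.1 + 1, k.2)
  map_snd : ∀ k, T₂ (e k) = (β k : ℂ) • e (k.1, k.2 + 1)
  comm : T₁ ∘L T₂ = T₂ ∘L T₁

/-- The product of the weights along the path from `(0, 0)` that runs right to `(k.1, 0)` and then
up to `k`. Its square is the moment `γ_k` of the weighted shift. -/
def weightProduct (α β : ℕ × ℕ → ℝ) (k : ℕ × ℕ) : ℝ :=
  (∏ i ∈ Finset.range k.1, α (i, 0)) * ∏ j ∈ Finset.range k.2, β (k.1, j)

section WeightedShift

variable {α β : ℕ × ℕ → ℝ} {T₁ T₂ : ℓ2 →L[ℂ] ℓ2}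

theorem norm_e (k : ℕ × ℕ) : ‖e k‖ = 1 := by
  simp [e, lp.norm_single]

theorem eq_of_forall_apply_e_eq {E : Type*} [NormedAddCommGroup E] [NormedSpace ℂ E]
    {A B : ℓ2 →L[ℂ] E} (h : ∀ k, A (e k) = B (e k)) : A = B :=
  lp.ext_continuousLinearMap (by simp) fun k => by
    ext
    simpa [e] using h k

theorem weightProduct_pos (hα : ∀ k, 0 < α k) (hβ : ∀ k, 0 < β k) (k : ℕ × ℕ) :
    0 < weightProduct α β k :=
  mul_pos (Finset.prod_pos fun _ _ => hα _) (Finset.prod_pos fun _ _ => hβ _)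

theorem weightProduct_succ_snd (α β : ℕ × ℕ → ℝ) (k : ℕ × ℕ) :
    weightProduct α β (k.1, k.2 + 1) = β k * weightProduct α β k := by
  simp only [weightProduct, Finset.prod_range_succ]
  ring

namespace IsWeightedShift

theorem weight_comm (h : IsWeightedShift α β T₁ T₂) (k : ℕ × ℕ) :
    β k * α (k.1, k.2 + 1) = α k * β (k.1 + 1, k.2) := by
  have he : e (k.1 + 1, k.2 + 1) ≠ 0 := norm_ne_zero_iff.mp (by simp [norm_e])
  have hk := DFunLike.congr_fun h.comm (e k)
  simp only [ContinuousLinearMap.comp_apply, h.map_fst, h.map_snd, map_smul, smul_smul] at hk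
  exact_mod_cast smul_left_injective ℂ he hk

theorem weightProduct_succ_fst (h : IsWeightedShift α β T₁ T₂) :
    ∀ k : ℕ × ℕ, weightProduct α β (k.1 + 1, k.2) = α k * weightProduct α β k
  | (i, 0) => by simp [weightProduct, Finset.prod_range_succ, mul_comm]
  | (i, j + 1) => by
    rw [weightProduct_succ_snd α β (i + 1, j), weightProduct_succ_snd α β (i, j),
      h.weightProduct_succ_fst (i, j), ← mul_assoc, ← mul_assoc, mul_comm (β _),
      mul_comm (α (i, j + 1)), h.weight_comm (i, j)]

theorem pow_apply_e_zero (h : IsWeightedShift α β T₁ T₂) (i j : ℕ) :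
    (T₁ ^ i) ((T₂ ^ j) (e (0, 0))) = (weightProduct α β (i, j) : ℂ) • e (i, j) := by
  induction i with
  | zero =>
    induction j with
    | zero => simp [weightProduct]
    | succ j ih =>
      rw [pow_zero, one_apply_eq_self] at ih ⊢
      rw [pow_succ', mul_apply_eq_comp, ih, map_smul, h.map_snd, smul_smul,
        weightProduct_succ_snd α β (0, j), mul_comm, Complex.ofReal_mul]
  | succ i ih =>
    rw [pow_succ', mul_apply_eq_comp, ih, map_smul, h.map_fst, smul_smul,
      h.weightProduct_succ_fst (i, j), mul_comm, Complex.ofReal_mul]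

theorem norm_pow_apply_e_zero (h : IsWeightedShift α β T₁ T₂) (i j : ℕ) :
    ‖(T₁ ^ i) ((T₂ ^ j) (e (0, 0)))‖ ^ 2 = weightProduct α β (i, j) ^ 2 := by
  rw [h.pow_apply_e_zero, norm_smul, norm_e, mul_one, Complex.norm_real, Real.norm_eq_abs, sq_abs]

end IsWeightedShift

end WeightedShift

section CommutingNormal

theorem commute_star_mul_self_star_mul_self {A : Type*} [NonUnitalCStarAlgebra A] {a b : A}
    (ha : IsStarNormal a) (hb : IsStarNormal b) (hab : Commute a b) :
    Commute (star a * a) (star b * b) :=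
  (hab.star_star.mul_left (hb.commute_star_right hab)).mul_right
    ((ha.commute_star_left hab).mul_left hab)

theorem star_mul_self_pow_mul {A : Type*} [CStarAlgebra A] {a b : A}
    (ha : IsStarNormal a) (hb : IsStarNormal b) (hab : Commute a b) (i j : ℕ) :
    (star a * a) ^ i * (star b * b) ^ j = star (a ^ i * b ^ j) * (a ^ i * b ^ j) := by
  have hstar : Commute ((star a * a) ^ i) (star b ^ j) :=
    (hab.star_star.mul_left (hb.commute_star_right hab)).pow_pow i j
  rw [hb.star_comm_self.mul_pow, ← mul_assoc, hstar.eq, ha.star_comm_self.mul_pow, star_mul,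
    star_pow, star_pow]
  simp only [mul_assoc]

theorem isSelfAdjoint_aeval {R A : Type*} [CommSemiring R] [Star R] [TrivialStar R] [Semiring A]
    [StarRing A] [Algebra R A] [StarModule R A] {a : A} (ha : IsSelfAdjoint a) (p : R[X]) :
    IsSelfAdjoint (aeval a p) := by
  induction p using Polynomial.induction_on' with
  | add p q hp hq => simpa using hp.add hq
  | monomial n r =>
    rw [aeval_monomial, ← Algebra.smul_def]
    exact (IsSelfAdjoint.all r).smul (ha.pow n)

theorem commute_aeval_aeval {R A : Type*} [CommSemiring R] [Semiring A] [Algebra R A]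
    {a b : A} (hab : Commute a b) (p q : R[X]) : Commute (aeval a p) (aeval b q) := by
  simpa only [aeval_eq_smeval] using smeval_commute R p q hab

theorem star_mul_self_aeval_mul_aeval {R A : Type*} [CommSemiring R] [Star R] [TrivialStar R]
    [Semiring A] [StarRing A] [Algebra R A] [StarModule R A] {a b : A} (ha : IsSelfAdjoint a)
    (hb : IsSelfAdjoint b) (hab : Commute a b) (p q : R[X]) :
    star (aeval a p * aeval b q) * (aeval a p * aeval b q) = aeval a (p ^ 2) * aeval b (q ^ 2) := by
  have hpq : Commute (aeval a p) (aeval b q) := commute_aeval_aeval hab p q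
  rw [star_mul, (isSelfAdjoint_aeval ha p).star_eq, (isSelfAdjoint_aeval hb q).star_eq,
    ← hpq.eq, map_pow, map_pow, ← sq, hpq.mul_pow]

variable {K : Type*} [NormedAddCommGroup K] [InnerProductSpace ℂ K] [CompleteSpace K]

/-- The functional `X ↦ Re ⟪v, X v⟫` on bounded operators. -/
def reInner (v : K) : (K →L[ℂ] K) →ₗ[ℝ] ℝ where
  toFun X := (inner ℂ v (X v)).re
  map_add' X Y := by simp
  map_smul' r X := by simp [← Complex.coe_smul]

theorem reInner_star_mul_self (v : K) (X : K →L[ℂ] K) :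
    reInner v (star X * X) = ‖X v‖ ^ 2 := by
  change (inner ℂ v (adjoint X (X v))).re = _
  rw [adjoint_inner_right]
  exact inner_self_eq_norm_sq (𝕜 := ℂ) (X v)

theorem apply_sq_sq_eq_norm_sq {N₁ N₂ : K →L[ℂ] K} (h₁ : IsStarNormal N₁) (h₂ : IsStarNormal N₂)
    (h₁₂ : Commute N₁ N₂) (v : K) {Λ : ℝ[X] →ₗ[ℝ] ℝ[X] →ₗ[ℝ] ℝ}
    (hΛ : ∀ i j, Λ (X ^ i) (X ^ j) = ‖(N₁ ^ i) ((N₂ ^ j) v)‖ ^ 2) (p q : ℝ[X]) :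
    Λ (p ^ 2) (q ^ 2) =
      ‖(aeval (star N₁ * N₁) p * aeval (star N₂ * N₂) q) v‖ ^ 2 := by
  have hAB := commute_star_mul_self_star_mul_self h₁ h₂ h₁₂
  have hext : Λ = ((LinearMap.mul ℝ (K →L[ℂ] K)).compl₁₂
      (aeval (star N₁ * N₁)).toLinearMap (aeval (star N₂ * N₂)).toLinearMap).compr₂
        (reInner v) := by
    refine LinearMap.ext_basis (basisMonomials ℝ) (basisMonomials ℝ) fun i j => ?_
    simp [monomial_one_right_eq_X_pow, hΛ, star_mul_self_pow_mul h₁ h₂ h₁₂,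
      -star_mul, reInner_star_mul_self]
  rw [hext, LinearMap.compr₂_apply, LinearMap.compl₁₂_apply]
  simp only [AlgHom.toLinearMap_apply, LinearMap.mul_apply']
  rw [← star_mul_self_aeval_mul_aeval (.star_mul_self N₁) (.star_mul_self N₂) hAB,
    reInner_star_mul_self]

end CommutingNormal

theorem IsWeightedShift.apply_sq_sq_nonneg {α β : ℕ × ℕ → ℝ} {T₁ T₂ : ℓ2 →L[ℂ] ℓ2}
    (hT : IsWeightedShift α β T₁ T₂) (h : SubnormalPair T₁ T₂) {Λ : ℝ[X] →ₗ[ℝ] ℝ[X] →ₗ[ℝ] ℝ}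
    (hΛ : ∀ i j, Λ (X ^ i) (X ^ j) = weightProduct α β (i, j) ^ 2) (p q : ℝ[X]) :
    0 ≤ Λ (p ^ 2) (q ^ 2) := by
  obtain ⟨K, _, _, _, N₁, N₂, V, h₁₂, h₁, h₂, hV₁, hV₂⟩ := h
  have hpow {N : K →L[ℂ] K} {T : ℓ2 →L[ℂ] ℓ2} (hV : ∀ x, N (V x) = V (T x)) (n : ℕ) (x : ℓ2) :
      (N ^ n) (V x) = V ((T ^ n) x) := by
    simpa only [FunLike.coe_pow_eq_iterate] using
      (Function.Semiconj.iterate_right (f := V) (fun x => (hV x).symm) n x).symm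
  rw [apply_sq_sq_eq_norm_sq ⟨h₁⟩ ⟨h₂⟩ h₁₂ (V (e (0, 0))) fun i j => by
    rw [hΛ, hpow hV₂, hpow hV₁, V.norm_map, hT.norm_pow_apply_e_zero]]
  positivity

section BergerSufficiency

variable {α β : ℕ × ℕ → ℝ} {T₁ T₂ : ℓ2 →L[ℂ] ℓ2}

theorem IsWeightedShift.subnormalPair_of_starAlgHom (hT : IsWeightedShift α β T₁ T₂)
    {A : Type*} [CommSemiring A] [Star A] [Algebra ℂ A] {K : Type} [NormedAddCommGroup K]
    [InnerProductSpace ℂ K] [CompleteSpace K] (π : A →⋆ₐ[ℂ] (K →L[ℂ] K)) (z₁ z₂ : A) {v : ℕ × ℕ → K}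
    (hv : Orthonormal ℂ v) (hπ₁ : ∀ k, π z₁ (v k) = (α k : ℂ) • v (k.1 + 1, k.2))
    (hπ₂ : ∀ k, π z₂ (v k) = (β k : ℂ) • v (k.1, k.2 + 1)) : SubnormalPair T₁ T₂ := by
  let V : ℓ2 →ₗᵢ[ℂ] K := hv.orthogonalFamily.linearIsometry
  have hV (k : ℕ × ℕ) : V (e k) = v k := by simp [V, e]
  have hπ_comm (x y : A) : π x ∘L π y = π y ∘L π x := ((Commute.all x y).map π).eq
  have hπ_normal (x : A) : adjoint (π x) ∘L π x = π x ∘L adjoint (π x) := by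
    rw [← star_eq_adjoint, ← map_star, hπ_comm]
  have hintertwine {N : K →L[ℂ] K} {T : ℓ2 →L[ℂ] ℓ2} (h : ∀ k, N (V (e k)) = V (T (e k)))
      (x : ℓ2) : N (V x) = V (T x) :=
    DFunLike.congr_fun (eq_of_forall_apply_e_eq (A := N ∘L V.toContinuousLinearMap)
      (B := V.toContinuousLinearMap ∘L T) h) x
  exact ⟨K, _, _, _, π z₁, π z₂, V, hπ_comm z₁ z₂, hπ_normal z₁, hπ_normal z₂,
    hintertwine fun k => by rw [hV, hπ₁, hT.map_fst, map_smul, hV],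
    hintertwine fun k => by rw [hV, hπ₂, hT.map_snd, map_smul, hV]⟩

theorem gnsStarAlgHom_apply_smul_toPreGNS {A : Type*} [CStarAlgebra A] [PartialOrder A]
    [StarOrderedRing A] (f : A →ₚ[ℂ] ℂ) (x y : A) (c : ℂ) :
    f.gnsStarAlgHom x (c • (f.toPreGNS y : f.GNS)) = c • (f.toPreGNS (x * y) : f.GNS) := by
  simp [PositiveLinearMap.gnsStarAlgHom]

theorem inner_coe_toPreGNS {A : Type*} [NonUnitalCStarAlgebra A] [PartialOrder A]
    [StarOrderedRing A] (f : A →ₚ[ℂ] ℂ) (x y : A) :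
    inner ℂ (f.toPreGNS x : f.GNS) (f.toPreGNS y : f.GNS) = f (star x * y) := by
  rw [UniformSpace.Completion.inner_coe, PositiveLinearMap.preGNS_inner_def]
  rfl

theorem IsWeightedShift.subnormalPair_of_positiveLinearMap (hT : IsWeightedShift α β T₁ T₂)
    (hα : ∀ k, 0 < α k) (hβ : ∀ k, 0 < β k) {A : Type} [CommCStarAlgebra A] [PartialOrder A]
    [StarOrderedRing A] (f : A →ₚ[ℂ] ℂ) (z₁ z₂ : A)
    (hf : ∀ k l : ℕ × ℕ, f (star (z₁ ^ k.1 * z₂ ^ k.2) * (z₁ ^ l.1 * z₂ ^ l.2)) =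
      if k = l then ((weightProduct α β k ^ 2 : ℝ) : ℂ) else 0) :
    SubnormalPair T₁ T₂ := by
  have hw (k : ℕ × ℕ) : (weightProduct α β k : ℂ) ≠ 0 := by
    exact_mod_cast (weightProduct_pos hα hβ k).ne'
  let u (k : ℕ × ℕ) : f.GNS := (f.toPreGNS (z₁ ^ k.1 * z₂ ^ k.2) : f.PreGNS)
  have horth : Orthonormal ℂ fun k => (weightProduct α β k : ℂ)⁻¹ • u k := by
    refine orthonormal_iff_ite.mpr fun k l => ?_
    rw [inner_smul_left, inner_smul_right, inner_coe_toPreGNS, hf]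
    split_ifs with hkl
    · rw [← hkl, map_inv₀, Complex.conj_ofReal, Complex.ofReal_pow]
      field [hw k]
    · simp only [mul_zero]
  have hshift {z : A} {c : ℝ} {k l : ℕ × ℕ} (hz : z * (z₁ ^ k.1 * z₂ ^ k.2) = z₁ ^ l.1 * z₂ ^ l.2)
      (hc : weightProduct α β l = c * weightProduct α β k) :
      f.gnsStarAlgHom z ((weightProduct α β k : ℂ)⁻¹ • u k) =
        (c : ℂ) • (weightProduct α β l : ℂ)⁻¹ • u l := by
    have hc' : (weightProduct α β k : ℂ)⁻¹ = c * (weightProduct α β l : ℂ)⁻¹ := by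
      rw [eq_mul_inv_iff_mul_eq₀ (hw l), hc, Complex.ofReal_mul, mul_left_comm,
        inv_mul_cancel₀ (hw k), mul_one]
    rw [gnsStarAlgHom_apply_smul_toPreGNS, hz, hc', mul_smul]
  exact hT.subnormalPair_of_starAlgHom f.gnsStarAlgHom z₁ z₂ horth
    (fun k => hshift (by ring) (hT.weightProduct_succ_fst k))
    fun k => hshift (by ring) (weightProduct_succ_snd α β k)

theorem integrable_of_continuous {X E : Type*} [TopologicalSpace X] [CompactSpace X]
    [MeasurableSpace X] [OpensMeasurableSpace X] [NormedAddCommGroup E]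
    [SecondCountableTopologyEither X E] {f : X → E} (hf : Continuous f) (μ : Measure X)
    [IsFiniteMeasure μ] : Integrable f μ :=
  hf.integrable_of_hasCompactSupport (.of_compactSpace f)

/-- Integration against a finite measure on a compact space `X`, as a positive functional on
`C(X, ℂ)`. -/
def integralPositiveLinearMap {X : Type*} [TopologicalSpace X] [CompactSpace X]
    [MeasurableSpace X] [OpensMeasurableSpace X] (μ : Measure X) [IsFiniteMeasure μ] :
    C(X, ℂ) →ₚ[ℂ] ℂ :=
  .mk₀
    { toFun f := ∫ x, f x ∂μ
      map_add' f g := integral_add (integrable_of_continuous f.continuous μ)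
        (integrable_of_continuous g.continuous μ)
      map_smul' c f := integral_const_mul c f }
    fun _ hf => integral_nonneg hf

theorem fourier_natCast_eq_pow {T : ℝ} (n : ℕ) (w : AddCircle T) :
    (fourier n w : ℂ) = fourier 1 w ^ n := by
  induction n with
  | zero => simp
  | succ n ih => rw [pow_succ, ← ih, Nat.cast_succ, fourier_add]

theorem integral_star_fourier_pow_mul_fourier_pow {T : ℝ} [Fact (0 < T)] (m n : ℕ) :
    ∫ w : AddCircle T, star (fourier 1 w ^ m : ℂ) * fourier 1 w ^ n ∂AddCircle.haarAddCircle =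
      if m = n then 1 else 0 := by
  have h := orthonormal_iff_ite.mp (orthonormal_fourier (T := T)) m n
  rw [ContinuousMap.inner_toLp] at h
  simp only [fourier_natCast_eq_pow, Nat.cast_inj] at h
  simpa only [mul_comm, RCLike.star_def] using h

section Torus

variable {Y : Type*} [TopologicalSpace Y]

/-- The function `((w₁, w₂), x) ↦ exp (2πi w₁) ρ x`: the first coordinate `z₁` of `ℂ²` in polar
coordinates. -/
def polarFst (ρ : C(Y, ℝ)) : C((UnitAddCircle × UnitAddCircle) × Y, ℂ) where
  toFun x := fourier 1 x.1.1 * (ρ x.2 : ℂ)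

/-- The function `((w₁, w₂), x) ↦ exp (2πi w₂) ρ x`: the second coordinate `z₂` of `ℂ²` in polar
coordinates. -/
def polarSnd (ρ : C(Y, ℝ)) : C((UnitAddCircle × UnitAddCircle) × Y, ℂ) where
  toFun x := fourier 1 x.1.2 * (ρ x.2 : ℂ)

theorem integral_star_polar_mul_polar [MeasurableSpace Y] (ν : Measure Y) [SFinite ν]
    (ρ₁ ρ₂ : C(Y, ℝ)) (k l : ℕ × ℕ) :
    ∫ x, (star (polarFst ρ₁ ^ k.1 * polarSnd ρ₂ ^ k.2) * (polarFst ρ₁ ^ l.1 * polarSnd ρ₂ ^ l.2)) x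
        ∂((AddCircle.haarAddCircle.prod AddCircle.haarAddCircle).prod ν) =
      if k = l then ((∫ x, (ρ₁ x ^ 2) ^ k.1 * (ρ₂ x ^ 2) ^ k.2 ∂ν : ℝ) : ℂ) else 0 := by
  let c (m n : ℕ) (w : UnitAddCircle) : ℂ := star (fourier 1 w ^ m : ℂ) * fourier 1 w ^ n
  let r (x : Y) : ℂ := ((ρ₁ x ^ (k.1 + l.1) * ρ₂ x ^ (k.2 + l.2) : ℝ) : ℂ)
  have hsplit (x : (UnitAddCircle × UnitAddCircle) × Y) :
      (star (polarFst ρ₁ ^ k.1 * polarSnd ρ₂ ^ k.2) * (polarFst ρ₁ ^ l.1 * polarSnd ρ₂ ^ l.2)) x =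
        c k.1 l.1 x.1.1 * c k.2 l.2 x.1.2 * r x.2 := by
    simp only [polarFst, polarSnd, c, r, ContinuousMap.mul_apply, ContinuousMap.star_apply,
      ContinuousMap.pow_apply, ContinuousMap.coe_mk, star_mul', star_pow, Complex.star_def,
      Complex.conj_ofReal, Complex.ofReal_mul, Complex.ofReal_pow]
    ring
  simp_rw [hsplit]
  rw [integral_prod_mul (fun w : UnitAddCircle × UnitAddCircle => c k.1 l.1 w.1 * c k.2 l.2 w.2) r,
    integral_prod_mul, integral_star_fourier_pow_mul_fourier_pow,
    integral_star_fourier_pow_mul_fourier_pow]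
  by_cases hkl : k = l
  · subst hkl
    simp only [r, if_true, one_mul, integral_complex_ofReal, ← pow_mul, two_mul]
  · rw [if_neg hkl]
    by_cases h : k.1 = l.1
    · have : k.2 ≠ l.2 := fun h' => hkl (Prod.ext h h')
      simp [this]
    · simp [h]

end Torus

theorem IsWeightedShift.subnormalPair_of_moments (hT : IsWeightedShift α β T₁ T₂)
    (hα : ∀ k, 0 < α k) (hβ : ∀ k, 0 < β k) {Y : Type} [TopologicalSpace Y] [CompactSpace Y]
    [MeasurableSpace Y] [OpensMeasurableSpace Y] (ν : Measure Y) [IsFiniteMeasure ν]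
    (ρ₁ ρ₂ : C(Y, ℝ))
    (hν : ∀ i j, ∫ x, (ρ₁ x ^ 2) ^ i * (ρ₂ x ^ 2) ^ j ∂ν = weightProduct α β (i, j) ^ 2) :
    SubnormalPair T₁ T₂ :=
  hT.subnormalPair_of_positiveLinearMap hα hβ
    (integralPositiveLinearMap
      ((AddCircle.haarAddCircle.prod AddCircle.haarAddCircle).prod ν))
    (polarFst ρ₁) (polarSnd ρ₂) fun k l =>
      (integral_star_polar_mul_polar ν ρ₁ ρ₂ k l).trans (by rw [hν])

end BergerSufficiency

section Figure2

theorem integral_unitInterval_coe {E : Type*} [NormedAddCommGroup E] [NormedSpace ℝ E]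
    (f : ℝ → E) : ∫ s : unitInterval, f s = ∫ s in (0 : ℝ)..1, f s := by
  rw [unitInterval.measurePreserving_coe.integral_comp
      (MeasurableEmbedding.subtype_coe measurableSet_Icc) f,
    integral_Icc_eq_integral_Ioc, intervalIntegral.integral_of_le zero_le_one]

/-- The functional `p ↦ ∫₀¹ p(s) ds` on real polynomials. -/
def unitIntegral : ℝ[X] →ₗ[ℝ] ℝ where
  toFun p := ∫ s in (0 : ℝ)..1, p.eval s
  map_add' p q := by
    simp only [eval_add]
    exact intervalIntegral.integral_add (p.continuous.intervalIntegrable 0 1)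
      (q.continuous.intervalIntegrable 0 1)
  map_smul' c p := by simp

theorem unitIntegral_apply (p : ℝ[X]) : unitIntegral p = ∫ s in (0 : ℝ)..1, p.eval s := rfl

theorem unitIntegral_X_pow (n : ℕ) : unitIntegral (X ^ n) = 1 / ((n : ℝ) + 1) := by
  simp [unitIntegral_apply]

theorem unitIntegral_one_sub_X_pow (n : ℕ) : unitIntegral ((1 - X) ^ n) = 1 / ((n : ℝ) + 1) := by
  simp [unitIntegral_apply, intervalIntegral.integral_comp_sub_left (fun s : ℝ => s ^ n) 1]

/-- The form `(p, q) ↦ ∫ p(s) q(t) dμ(s, t)` for the signed measure `μ` on `[0, 1]²` whose moments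
are those of the weighted shift of Figure 2. -/
def figure2Form (a y : ℝ) : ℝ[X] →ₗ[ℝ] ℝ[X] →ₗ[ℝ] ℝ :=
  (y ^ 2 * (1 - a ^ 2)) • (leval 0).smulRight (leval 1) +
    (y ^ 2 * a ^ 2) • (leval 1).smulRight (leval 1) +
    (y ^ 2 * (1 / 2 - a ^ 2)) • (leval 1).smulRight (leval 0) +
    (1 - y ^ 2 * (2 - a ^ 2)) • (leval 0).smulRight (leval 0) +
    (y ^ 2 / 2) • unitIntegral.smulRight (leval 0)

theorem figure2Form_apply (a y : ℝ) (p q : ℝ[X]) :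
    figure2Form a y p q =
      y ^ 2 * (1 - a ^ 2) * (p.eval 0 * q.eval 1) + y ^ 2 * a ^ 2 * (p.eval 1 * q.eval 1) +
        y ^ 2 * (1 / 2 - a ^ 2) * (p.eval 1 * q.eval 0) +
        (1 - y ^ 2 * (2 - a ^ 2)) * (p.eval 0 * q.eval 0) +
        y ^ 2 / 2 * (unitIntegral p * q.eval 0) := rfl

variable {a y : ℝ}

theorem xseq_pos (hy : 0 < y) : ∀ n, 0 < xseq y n
  | 0 => by simp only [xseq]; positivity
  | n + 1 => by simp only [xseq]; positivity

theorem prod_xseq_sq (y : ℝ) (n : ℕ) :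
    (∏ i ∈ Finset.range (n + 1), xseq y i) ^ 2 =
      y ^ 2 * (1 / 2 + 1 / 2 * (1 / ((n : ℝ) + 2))) := by
  induction n with
  | zero =>
    rw [zero_add, Finset.prod_range_one, xseq, mul_pow, Real.sq_sqrt (by norm_num)]
    norm_num
  | succ n ih =>
    rw [Finset.prod_range_succ, mul_pow, ih, xseq, div_pow, Real.sq_sqrt (by positivity)]
    push_cast
    field

theorem alphaF_pos (ha : 0 < a) (hy : 0 < y) : ∀ k, 0 < alphaF a y k
  | (n, 0) => xseq_pos hy n
  | (0, _ + 1) => ha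
  | (_ + 1, _ + 1) => one_pos

theorem betaF_pos (ha : 0 < a) (hy : 0 < y) : ∀ k, 0 < betaF a y k
  | (0, 0) => hy
  | (_ + 1, 0) => div_pos (mul_pos ha hy) (Finset.prod_pos fun i _ => xseq_pos hy i)
  | (0, _ + 1) => one_pos
  | (_ + 1, _ + 1) => one_pos

theorem weightProduct_alphaF_betaF_zero_succ (a y : ℝ) (j : ℕ) :
    weightProduct (alphaF a y) (betaF a y) (0, j + 1) = y := by
  simp [weightProduct, Finset.prod_range_succ', betaF]

theorem weightProduct_alphaF_betaF_succ_succ (hy : 0 < y) (a : ℝ) (n j : ℕ) :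
    weightProduct (alphaF a y) (betaF a y) (n + 1, j + 1) = a * y := by
  have hx : ∏ i ∈ Finset.range (n + 1), xseq y i ≠ 0 :=
    (Finset.prod_pos fun i _ => xseq_pos hy i).ne'
  simp only [weightProduct, Finset.prod_range_succ' _ j, alphaF, betaF, Finset.prod_const_one,
    one_mul]
  field

theorem figure2Form_X_pow_X_pow (hy : 0 < y) (a : ℝ) :
    ∀ i j, figure2Form a y (X ^ i) (X ^ j) = weightProduct (alphaF a y) (betaF a y) (i, j) ^ 2
  | 0, 0 => by
    have h : weightProduct (alphaF a y) (betaF a y) (0, 0) = 1 := by simp [weightProduct]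
    rw [figure2Form_apply, unitIntegral_X_pow, h]
    simp only [pow_zero, eval_one, Nat.cast_zero]
    ring
  | n + 1, 0 => by
    have h : weightProduct (alphaF a y) (betaF a y) (n + 1, 0) =
        ∏ i ∈ Finset.range (n + 1), xseq y i := by simp [weightProduct, alphaF]
    rw [figure2Form_apply, unitIntegral_X_pow, h, prod_xseq_sq]
    simp only [eval_pow, eval_X, pow_zero, eval_one, zero_pow n.succ_ne_zero, one_pow,
      Nat.cast_succ]
    field
  | 0, j + 1 => by
    rw [figure2Form_apply, weightProduct_alphaF_betaF_zero_succ]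
    simp only [eval_pow, eval_X, pow_zero, eval_one, zero_pow j.succ_ne_zero, one_pow]
    ring
  | n + 1, j + 1 => by
    rw [figure2Form_apply, weightProduct_alphaF_betaF_succ_succ hy]
    simp only [eval_pow, eval_X, zero_pow n.succ_ne_zero, zero_pow j.succ_ne_zero, one_pow]
    ring

theorem figure2Form_one_sub_X_pow_sq {m : ℕ} (hm : m ≠ 0) (a y : ℝ) :
    figure2Form a y (((1 - X) ^ m) ^ 2) ((1 - X) ^ 2) =
      1 - y ^ 2 * (2 - a ^ 2) + y ^ 2 / 2 * (1 / (((m * 2 : ℕ) : ℝ) + 1)) := by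
  simp only [← pow_mul, figure2Form_apply, unitIntegral_one_sub_X_pow]
  simp [hm]

theorem figure2Form_X_pow_sq {m : ℕ} (hm : m ≠ 0) (a y : ℝ) :
    figure2Form a y ((X ^ m) ^ 2) ((1 - X) ^ 2) =
      y ^ 2 * (1 / 2 - a ^ 2) + y ^ 2 / 2 * (1 / (((m * 2 : ℕ) : ℝ) + 1)) := by
  simp only [← pow_mul, figure2Form_apply, unitIntegral_X_pow]
  simp [hm]

theorem nonneg_of_forall_nonneg_add_one_div {c d : ℝ}
    (h : ∀ m : ℕ, m ≠ 0 → 0 ≤ c + d * (1 / (((m * 2 : ℕ) : ℝ) + 1))) : 0 ≤ c := by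
  have hlim : Filter.Tendsto (fun m : ℕ => c + d * (1 / (((m * 2 : ℕ) : ℝ) + 1))) Filter.atTop
      (nhds (c + d * 0)) :=
    ((tendsto_one_div_add_atTop_nhds_zero_nat.comp
      (Filter.tendsto_id.atTop_mul_const' two_pos)).const_mul d).const_add c
  rw [mul_zero, add_zero] at hlim
  exact ge_of_tendsto hlim ((Filter.eventually_ne_atTop 0).mono h)

/-- The Berger measure of the weighted shift of Figure 2. Negative coefficients are truncated to
`0`, so this is the measure behind `figure2Form` only when all coefficients are nonnegative. -/
def figure2BergerMeasure (a y : ℝ) : Measure (unitInterval × unitInterval) :=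
  (y ^ 2 * (1 - a ^ 2)).toNNReal • Measure.dirac (0, 1) +
    (y ^ 2 * a ^ 2).toNNReal • Measure.dirac (1, 1) +
    (y ^ 2 * (1 / 2 - a ^ 2)).toNNReal • Measure.dirac (1, 0) +
    (1 - y ^ 2 * (2 - a ^ 2)).toNNReal • Measure.dirac (0, 0) +
    (y ^ 2 / 2).toNNReal • volume.prod (Measure.dirac 0)

instance isFiniteMeasure_figure2BergerMeasure (a y : ℝ) :
    IsFiniteMeasure (figure2BergerMeasure a y) := by
  unfold figure2BergerMeasure
  infer_instance

theorem integral_figure2BergerMeasure (ha : 0 ≤ 1 / 2 - a ^ 2) (hy : 0 ≤ 1 - y ^ 2 * (2 - a ^ 2))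
    (p q : ℝ[X]) :
    ∫ x, p.eval (x.1 : ℝ) * q.eval (x.2 : ℝ) ∂figure2BergerMeasure a y = figure2Form a y p q := by
  have hint (μ : Measure (unitInterval × unitInterval)) [IsFiniteMeasure μ] :
      Integrable (fun x => p.eval (x.1 : ℝ) * q.eval (x.2 : ℝ)) μ :=
    integrable_of_continuous (by fun_prop) μ
  have hprod : ∫ x : unitInterval × unitInterval, p.eval (x.1 : ℝ) * q.eval (x.2 : ℝ)
      ∂volume.prod (Measure.dirac 0) = unitIntegral p * q.eval 0 := by
    rw [integral_prod_mul (fun s : unitInterval => p.eval (s : ℝ))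
      (fun t : unitInterval => q.eval (t : ℝ)), integral_dirac,
      integral_unitInterval_coe (fun s => p.eval s), unitIntegral_apply, Set.Icc.coe_zero]
  have ha₁ : 0 ≤ 1 - a ^ 2 := by linarith
  rw [figure2BergerMeasure, integral_add_measure (hint _) (hint _),
    integral_add_measure (hint _) (hint _), integral_add_measure (hint _) (hint _),
    integral_add_measure (hint _) (hint _), figure2Form_apply]
  simp only [integral_smul_nnreal_measure, integral_dirac, hprod, NNReal.smul_def, smul_eq_mul,
    Set.Icc.coe_zero, Set.Icc.coe_one]
  rw [Real.coe_toNNReal _ hy, Real.coe_toNNReal _ (by positivity),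
    Real.coe_toNNReal _ (by positivity), Real.coe_toNNReal _ (by positivity),
    Real.coe_toNNReal _ (by positivity)]

variable {T₁ T₂ : ℓ2 →L[ℂ] ℓ2}

theorem IsWeightedShift.subnormalPair_figure2_iff
    (hT : IsWeightedShift (alphaF a y) (betaF a y) T₁ T₂) (ha : 0 < a) (hy : 0 < y) :
    SubnormalPair T₁ T₂ ↔ 0 ≤ 1 / 2 - a ^ 2 ∧ 0 ≤ 1 - y ^ 2 * (2 - a ^ 2) := by
  refine ⟨fun h => ?_, fun ⟨ha', hy'⟩ => ?_⟩
  · have hnonneg := hT.apply_sq_sq_nonneg h (figure2Form_X_pow_X_pow hy a)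
    refine ⟨nonneg_of_mul_nonneg_right ?_ (pow_pos hy 2), ?_⟩ <;>
      refine nonneg_of_forall_nonneg_add_one_div (d := y ^ 2 / 2) fun m hm => ?_
    · rw [← figure2Form_X_pow_sq hm]
      exact hnonneg _ _
    · rw [← figure2Form_one_sub_X_pow_sq hm]
      exact hnonneg _ _
  · refine hT.subnormalPair_of_moments (alphaF_pos ha hy) (betaF_pos ha hy)
      (figure2BergerMeasure a y) ⟨fun x => √x.1, by fun_prop⟩ ⟨fun x => √x.2, by fun_prop⟩
      fun i j => ?_
    rw [← figure2Form_X_pow_X_pow hy, ← integral_figure2BergerMeasure ha' hy']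
    simp only [ContinuousMap.coe_mk, Real.sq_sqrt (unitInterval.nonneg _), eval_pow, eval_X]

theorem le_one_div_sqrt_two_iff (ha : 0 < a) : a ≤ 1 / √2 ↔ 0 ≤ 1 / 2 - a ^ 2 := by
  rw [one_div, ← Real.sqrt_inv, Real.le_sqrt' ha, one_div, sub_nonneg]

theorem le_sqrt_one_div_iff {b : ℝ} (hb : 0 < b) (hy : 0 < y) :
    y ≤ √(1 / b) ↔ 0 ≤ 1 - y ^ 2 * b := by
  rw [Real.le_sqrt' hy, le_div_iff₀ hb, sub_nonneg]

end Figure2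

theorem figure2_subnormal_iff_general (a y : ℝ) (ha : 0 < a) (hy : 0 < y) (T₁ T₂ : ℓ2 →L[ℂ] ℓ2)
    (hT₁ : ∀ k : ℕ × ℕ, T₁ (e k) = ((alphaF a y k : ℂ)) • e (k.1 + 1, k.2))
    (hT₂ : ∀ k : ℕ × ℕ, T₂ (e k) = ((betaF a y k : ℂ)) • e (k.1, k.2 + 1))
    (hcomm : T₁ ∘L T₂ = T₂ ∘L T₁) :
    SubnormalPair T₁ T₂ ↔ a ≤ 1 / √2 ∧ y ≤ √(1 / (2 - a ^ 2)) := by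
  have hT : IsWeightedShift (alphaF a y) (betaF a y) T₁ T₂ := ⟨hT₁, hT₂, hcomm⟩
  rw [hT.subnormalPair_figure2_iff ha hy, le_one_div_sqrt_two_iff ha]
  exact and_congr_right fun ha' => (le_sqrt_one_div_iff (by linarith) hy).symm

/-- For `0 < a ≤ 1/√2` and `0 < y ≤ 1`, the 2-variable weighted shift of Figure 2 is
subnormal iff `y ≤ √(1/(2−a²))`. -/
theorem figure2_subnormal_iff (a y : ℝ) (ha : 0 < a) (ha' : a ≤ 1 / Real.sqrt 2)
    (hy : 0 < y) (hy' : y ≤ 1)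
    (T₁ T₂ : ℓ2 →L[ℂ] ℓ2)
    (hT₁ : ∀ k : ℕ × ℕ, T₁ (e k) = ((alphaF a y k : ℂ)) • e (k.1 + 1, k.2))
    (hT₂ : ∀ k : ℕ × ℕ, T₂ (e k) = ((betaF a y k : ℂ)) • e (k.1, k.2 + 1))
    (hcomm : T₁ ∘L T₂ = T₂ ∘L T₁) :
    SubnormalPair T₁ T₂ ↔ y ≤ Real.sqrt (1 / (2 - a ^ 2)) :=
  (figure2_subnormal_iff_general a y ha hy T₁ T₂ hT₁ hT₂ hcomm).trans (and_iff_right ha')
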